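/- Let k be a field of characteristic 2, let n ≥ 4, and let Q_{2^n} be the generalized quaternion group of order 2^n. The dimensions of the group cohomology of Q_{2^n} with trivial coefficients k are 4-periodic: for all s ≥ 0, dim_k H^s(Q_{2^n}; k) = 1 if s ≡ 0 or 3 (mod 4), and dim_k H^s(Q_{2^n}; k) = 2 if s ≡ 1 or 2 (mod 4). (This reflects the ring isomorphism H^*(Q_{2^n}; k) ≅ k[x₁, x₂, e₄]/(x₁x₂, x₁³ + x₂³) with |x₁| = |x₂| = 1 and |e₄| = 4.) -/

import Mathlib

/-!
Let `A = k[Q]` be the group ring of the dicyclic group `Q` with generators `x`, `y`. Right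
multiplication by four small matrices gives an exact sequence of free left modules
`0 → k → A → A² → A² → A → A → A² → ⋯` that repeats with period four. When `k` has characteristic
`2` and `4` divides the order of `x`, all matrix entries have augmentation zero, so the
differentials kill the invariants, which are the multiples of the norm element in each coordinate.
Free modules are acyclic, so cutting the sequence into short exact sequences shifts dimensions
without loss: `Hˢ(Q; k)` is the space of invariants of the `s`-th free module, and its dimension is
the rank of that module.

Exactness rests on a normal form: every element of `A` is `α + β y + w (x - 1)` with `α, β ∈ k`, and
the elements killed by `x - 1` on the right are `α N + β y N`, for `N` the sum of the powers of `x`.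
-/

open CategoryTheory CategoryTheory.Limits
open scoped MonoidAlgebra Matrix

universe u

namespace QuaternionCohomology

section DimensionShifting

variable {k G : Type u} [CommRing k] [Group G] {X Y Z : Rep.{u} k G}

theorem exists_shortComplex_exact {f : X ⟶ Y} {g : Y ⟶ Z} (h : Function.Exact f.hom g.hom) :
    ∃ w : f ≫ g = 0, (ShortComplex.mk f g w).Exact := by
  refine ⟨Rep.hom_ext (Representation.IntertwiningMap.ext (LinearMap.ext h.apply_apply_eq_zero)),
    ?_⟩
  rw [← ShortComplex.exact_map_iff_of_faithful _ (forget₂ (Rep k G) (ModuleCat k)),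
    ShortComplex.moduleCat_exact_iff]
  exact fun x hx => (h x).1 hx

theorem map_groupCohomology_zero_eq_zero {f : X ⟶ Y} (hf : ∀ v ∈ X.ρ.invariants, f.hom v = 0) :
    (groupCohomology.functor k G 0).map f = 0 := by
  have hinv : (Rep.invariantsFunctor k G).map f = 0 := by
    ext v
    exact Subtype.ext (hf v.1 v.2)
  change groupCohomology.map (MonoidHom.id G) f 0 = 0
  rw [← cancel_mono (groupCohomology.H0Iso Y).hom, groupCohomology.map_id_comp_H0Iso_hom, hinv,
    comp_zero, zero_comp]

theorem kernel_ι_comp_lift {f : X ⟶ Y} {g : Y ⟶ Z} (w : f ≫ g = 0) :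
    kernel.ι f ≫ kernel.lift g f w = 0 := by
  simp [← cancel_mono (kernel.ι g)]

theorem shortExact_kernel_lift {f : X ⟶ Y} {g : Y ⟶ Z} {w : f ≫ g = 0}
    (h : (ShortComplex.mk f g w).Exact) :
    (ShortComplex.mk (kernel.ι f) (kernel.lift g f w) (kernel_ι_comp_lift w)).ShortExact where
  exact := ShortComplex.exact_of_f_is_kernel _
    (isKernelOfComp _ _ (kernelIsKernel f) _ (kernel.lift_ι _ _ _))
  mono_f := inferInstanceAs (Mono (kernel.ι f))
  epi_g := (ShortComplex.exact_iff_epi_kernel_lift _).1 h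

theorem map_kernel_lift_zero_eq_zero {f : X ⟶ Y} {g : Y ⟶ Z} (w : f ≫ g = 0)
    (hf : (groupCohomology.functor k G 0).map f = 0) :
    (groupCohomology.functor k G 0).map (kernel.lift g f w) = 0 := by
  have : Mono ((groupCohomology.functor k G 0).map (kernel.ι g)) :=
    groupCohomology.mono_map_0_of_mono _
  refine zero_of_comp_mono ((groupCohomology.functor k G 0).map (kernel.ι g)) ?_
  rw [← Functor.map_comp, kernel.lift_ι, hf]

variable {S : ShortComplex (Rep.{u} k G)} (hS : S.ShortExact)
  (hg : (groupCohomology.functor k G 0).map S.g = 0)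
include hS hg

theorem isIso_map_zero_of_shortExact : IsIso ((groupCohomology.functor k G 0).map S.f) := by
  have : Epi ((groupCohomology.functor k G 0).map S.f) :=
    (groupCohomology.mapShortComplex₂_exact hS 0).epi_f hg
  have := hS.mono_f
  have : Mono ((groupCohomology.functor k G 0).map S.f) := groupCohomology.mono_map_0_of_mono S.f
  exact isIso_of_mono_of_epi _

theorem isIso_δ_of_acyclic (hacyc : ∀ n, IsZero (groupCohomology S.X₂ (n + 1))) (n : ℕ) :
    IsIso (groupCohomology.δ hS n (n + 1) rfl) := by
  cases n with
  | zero =>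
    have := groupCohomology.epi_δ_of_isZero hS 0 (hacyc 0)
    have : Mono (groupCohomology.δ hS 0 1 rfl) :=
      (groupCohomology.mapShortComplex₃_exact hS rfl).mono_g hg
    exact isIso_of_mono_of_epi _
  | succ n => exact groupCohomology.isIso_δ_of_isZero hS _ (hacyc n) (hacyc (n + 1))

end DimensionShifting

section MinimalComplex

variable {k G : Type u} [CommRing k] [Group G]

theorem nonempty_groupCohomology_kernel_iso {X : ℕ → Rep.{u} k G} {d : ∀ n, X n ⟶ X (n + 1)}
    (hd : ∀ n, Function.Exact (d n).hom (d (n + 1)).hom)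
    (hacyc : ∀ n i, IsZero (groupCohomology (X n) (i + 1)))
    (hmin : ∀ n, ∀ v ∈ (X n).ρ.invariants, (d n).hom v = 0) (n : ℕ) :
    Nonempty (groupCohomology (kernel (d 0)) n ≅ groupCohomology (X n) 0) := by
  induction n generalizing X with
  | zero =>
    obtain ⟨w, hw⟩ := exists_shortComplex_exact (hd 0)
    have : IsIso ((groupCohomology.functor k G 0).map (kernel.ι (d 0))) :=
      isIso_map_zero_of_shortExact (shortExact_kernel_lift hw)
        (map_kernel_lift_zero_eq_zero w (map_groupCohomology_zero_eq_zero (hmin 0)))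
    have e := asIso ((groupCohomology.functor k G 0).map (kernel.ι (d 0)))
    exact ⟨e⟩
  | succ n ih =>
    obtain ⟨w, hw⟩ := exists_shortComplex_exact (hd 0)
    have := isIso_δ_of_acyclic (shortExact_kernel_lift hw)
      (map_kernel_lift_zero_eq_zero w (map_groupCohomology_zero_eq_zero (hmin 0))) (hacyc 0) n
    obtain ⟨e⟩ := ih (d := fun n => d (n + 1)) (fun n => hd (n + 1)) (fun n => hacyc (n + 1))
      (fun n => hmin (n + 1))
    exact ⟨(asIso (groupCohomology.δ (shortExact_kernel_lift hw) n (n + 1) rfl)).symm ≪≫ e⟩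

theorem nonempty_groupCohomology_iso {A : Rep.{u} k G} {X : ℕ → Rep.{u} k G} {ι : A ⟶ X 0}
    {d : ∀ n, X n ⟶ X (n + 1)} (hι : Function.Injective ι.hom)
    (hιd : Function.Exact ι.hom (d 0).hom)
    (hd : ∀ n, Function.Exact (d n).hom (d (n + 1)).hom)
    (hacyc : ∀ n i, IsZero (groupCohomology (X n) (i + 1)))
    (hmin : ∀ n, ∀ v ∈ (X n).ρ.invariants, (d n).hom v = 0) (n : ℕ) :
    Nonempty (groupCohomology A n ≅ groupCohomology (X n) 0) := by
  obtain ⟨w, hw⟩ := exists_shortComplex_exact hιd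
  obtain ⟨e⟩ := nonempty_groupCohomology_kernel_iso hd hacyc hmin n
  have : Mono ι := (Rep.mono_iff_injective ι).2 hι
  have : IsIso (kernel.lift (d 0) ι w) :=
    have := (ShortComplex.exact_iff_epi_kernel_lift _).1 hw
    isIso_of_mono_of_epi _
  exact ⟨(groupCohomology.functor k G n).mapIso (asIso (kernel.lift (d 0) ι w)) ≪≫ e⟩

end MinimalComplex

section FreeModule

variable {k G : Type u} [CommRing k] [Group G]

variable (k G) in
/-- The free representation `k[G]ⁿ`, with `G` acting by left multiplication. -/
noncomputable abbrev freeRep (n : ℕ) : Rep.{u} k G :=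
  Rep.of (Representation.ofModule' (k := k) (G := G) (Fin n → k[G]))

/-- The morphism `k[G]ᵐ ⟶ k[G]ⁿ` sending a row vector `v` to `v * D`. -/
noncomputable def freeRepHom {m n : ℕ} (D : Matrix (Fin m) (Fin n) k[G]) :
    freeRep k G m ⟶ freeRep k G n :=
  Rep.ofHom
    { toFun v := v ᵥ* D
      map_add' v w := Matrix.add_vecMul D v w
      map_smul' c v := Matrix.smul_vecMul c v D
      isIntertwining' g := by
        refine LinearMap.ext fun v => ?_
        exact Matrix.smul_vecMul (MonoidAlgebra.single g (1 : k)) v D }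

/-- The free representation `k[G]ⁿ` is coinduced from the trivial subgroup; passing to inverses
turns left multiplication into the right translation used by `Representation.coind`. -/
noncomputable def freeEquivCoind [Finite G] (n : ℕ) :
    (Representation.ofModule' (k := k) (G := G) (Fin n → k[G])).Equiv
      (Representation.coind (⊥ : Subgroup G).subtype
        (Representation.trivial k (⊥ : Subgroup G) (Fin n → k))) where
  toFun v := ⟨fun h i => (v i).coeff h⁻¹, by
    rintro ⟨g, hg⟩ h
    obtain rfl := Subgroup.mem_bot.1 hg
    simp⟩
  map_add' _ _ := by ext; simp
  map_smul' _ _ := by ext; simp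
  invFun F i :=
    .ofCoeff (Finsupp.equivFunOnFinite.symm fun h => F.1 h⁻¹ i)
  left_inv v := by ext; simp
  right_inv F := by ext; simp
  isIntertwining' g := by
    refine LinearMap.ext fun v => Subtype.ext (funext₂ fun h i => ?_)
    change (MonoidAlgebra.single g (1 : k) * v i).coeff h⁻¹ = (v i).coeff (h * g)⁻¹
    simp [MonoidAlgebra.coeff_single_mul_apply]

/-- Shapiro's lemma for free representations. -/
noncomputable def groupCohomologyFreeRepIso [Finite G] (n i : ℕ) :
    groupCohomology (freeRep k G n) i ≅
      groupCohomology (Rep.trivial k (⊥ : Subgroup G) (Fin n → k)) i :=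
  (groupCohomology.functor k G i).mapIso (Rep.mkIso (freeEquivCoind n)) ≪≫
    groupCohomology.coindIso (Rep.trivial k (⊥ : Subgroup G) (Fin n → k)) i

theorem isZero_groupCohomology_freeRep [Finite G] (n i : ℕ) :
    IsZero (groupCohomology (freeRep k G n) (i + 1)) :=
  (isZero_groupCohomology_succ_of_subsingleton _ i).of_iso (groupCohomologyFreeRepIso n (i + 1))

theorem finrank_groupCohomology_zero_freeRep [Nontrivial k] [Finite G] (n : ℕ) :
    Module.finrank k (groupCohomology (freeRep k G n) 0) = n := by
  rw [((groupCohomologyFreeRepIso n 0) ≪≫ groupCohomology.H0Iso _).toLinearEquiv.finrank_eq,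
    Representation.invariants_eq_top, finrank_top]
  exact Module.finrank_fin_fun k

end FreeModule

section Augmentation

variable (k G : Type u) [CommRing k] [Group G]

/-- The augmentation `ε : k[G] → k`, sending every group element to `1`. -/
noncomputable def augmentation : k[G] →ₐ[k] k :=
  MonoidAlgebra.lift k k G 1

variable {k G}

theorem augmentation_single (g : G) (c : k) :
    augmentation k G (MonoidAlgebra.single g c) = c := by
  simp [augmentation]

end Augmentation

section NormElement

variable (k G : Type u) [CommRing k] [Fintype G]

/-- The norm element `∑ g` of `k[G]`. -/
noncomputable def normElement : k[G] :=
  ∑ g : G, MonoidAlgebra.single g 1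

theorem coeff_normElement (g : G) : (normElement k G).coeff g = 1 := by
  classical
  simp [normElement, MonoidAlgebra.coeff_sum, Finsupp.single_apply]

variable {k G} [Group G]

theorem normElement_mul (b : k[G]) :
    normElement k G * b = augmentation k G b • normElement k G := by
  induction b using MonoidAlgebra.induction_linear with
  | zero => simp
  | add a b ha hb => rw [mul_add, ha, hb, map_add, add_smul]
  | single g c =>
    ext h
    simp [MonoidAlgebra.coeff_mul_single_apply, coeff_normElement, augmentation_single]

theorem mul_normElement (b : k[G]) :
    b * normElement k G = augmentation k G b • normElement k G := by
  induction b using MonoidAlgebra.induction_linear with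
  | zero => simp
  | add a b ha hb => rw [add_mul, ha, hb, map_add, add_smul]
  | single g c =>
    ext h
    simp [MonoidAlgebra.coeff_single_mul_apply, coeff_normElement, augmentation_single]

theorem single_mul_normElement (g : G) :
    MonoidAlgebra.single g (1 : k) * normElement k G = normElement k G := by
  rw [mul_normElement, augmentation_single, one_smul]

theorem eq_smul_normElement_of_single_mul_eq {b : k[G]}
    (hb : ∀ g, MonoidAlgebra.single g (1 : k) * b = b) : b = b.coeff 1 • normElement k G := by
  ext h
  have := congrArg (fun p : k[G] => p.coeff h) (hb h)
  simpa [MonoidAlgebra.coeff_single_mul_apply, coeff_normElement] using this.symm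

theorem eq_zero_of_smul_normElement_eq_zero {c : k} (h : c • normElement k G = 0) : c = 0 := by
  simpa [coeff_normElement] using congrArg (fun p : k[G] => p.coeff 1) h

end NormElement

section Coresolution

variable {k G : Type u} [CommRing k] [Group G]

theorem vecMul_eq_zero_of_mem_invariants [Finite G] {m n : ℕ} {D : Matrix (Fin m) (Fin n) k[G]}
    (hD : ∀ i j, augmentation k G (D i j) = 0) {v : Fin m → k[G]}
    (hv : v ∈ (freeRep k G m).ρ.invariants) : v ᵥ* D = 0 := by
  have := Fintype.ofFinite G
  refine funext fun j => ?_
  change ∑ i, v i * D i j = 0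
  refine Finset.sum_eq_zero fun i _ => ?_
  have hvi := eq_smul_normElement_of_single_mul_eq fun g => congrFun (hv g) i
  rw [hvi, smul_mul_assoc, normElement_mul, hD, zero_smul, smul_zero]

variable (k G) [Fintype G]

/-- An exact sequence `0 → k → k[G]^r₀ → k[G]^r₁ → ⋯` of left `k[G]`-modules with `r₀ = 1`, where
the first map is multiplication by the norm element and the others are right multiplication by
matrices over the augmentation ideal, so that they vanish on invariants. -/
structure MinimalFreeCoresolution where
  rank : ℕ → ℕ
  d : ∀ n, Matrix (Fin (rank n)) (Fin (rank (n + 1))) k[G]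
  rank_zero : rank 0 = 1
  exact_zero : Function.Exact (fun (c : k) (_ : Fin (rank 0)) => c • normElement k G) (· ᵥ* d 0)
  exact_succ : ∀ n, Function.Exact (· ᵥ* d n) (· ᵥ* d (n + 1))
  augmentation_d : ∀ n i j, augmentation k G (d n i j) = 0

variable {k G}

/-- The morphism `k ⟶ k[G]ⁿ` sending `c` to `(c • N, …, c • N)`, for `N` the norm element. -/
noncomputable def coaugmentation (n : ℕ) : Rep.trivial k G k ⟶ freeRep k G n :=
  Rep.ofHom
    { toFun c := fun _ => c • normElement k G
      map_add' c c' := funext fun _ => add_smul c c' _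
      map_smul' c c' := funext fun _ => mul_smul c c' _
      isIntertwining' g := by
        refine LinearMap.ext fun c => funext fun i => ?_
        change c • normElement k G = MonoidAlgebra.single g (1 : k) * (c • normElement k G)
        rw [mul_smul_comm, single_mul_normElement] }

theorem MinimalFreeCoresolution.finrank_groupCohomology [Nontrivial k]
    (R : MinimalFreeCoresolution k G) (n : ℕ) :
    Module.finrank k (groupCohomology (Rep.trivial k G k) n) = R.rank n := by
  have hinj : Function.Injective (coaugmentation (k := k) (G := G) (R.rank 0)).hom := by
    refine (injective_iff_map_eq_zero _).2 fun c hc => ?_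
    exact eq_zero_of_smul_normElement_eq_zero (congrFun hc ⟨0, by simp [R.rank_zero]⟩)
  obtain ⟨e⟩ := nonempty_groupCohomology_iso (d := fun n => freeRepHom (R.d n)) hinj R.exact_zero
    R.exact_succ (fun n => isZero_groupCohomology_freeRep (R.rank n))
    (fun n v hv => vecMul_eq_zero_of_mem_invariants (R.augmentation_d n) hv) n
  rw [e.toLinearEquiv.finrank_eq, finrank_groupCohomology_zero_freeRep]

end Coresolution

section Relations

/-- The relations between the generators of the dicyclic group of order `4 * m`, imposed on two
elements of a monoid. -/
structure DicyclicRelations {M : Type*} [Monoid M] (m : ℕ) (x y : M) : Prop where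
  mul_mul_self : x * y * x = y
  sq_eq_pow : y ^ 2 = x ^ m
  pow_two_mul : x ^ (2 * m) = 1

/-- The sum `1 + x + ⋯ + x ^ (n - 1)`. -/
def powSum {A : Type*} [Semiring A] (x : A) (n : ℕ) : A :=
  ∑ j ∈ Finset.range n, x ^ j

theorem pow_mul_mul_pow {M : Type*} [Monoid M] {x y : M} (hxyx : x * y * x = y) (n : ℕ) :
    x ^ n * y * x ^ n = y := by
  induction n with
  | zero => simp
  | succ n ih =>
    calc x ^ (n + 1) * y * x ^ (n + 1) = x ^ n * (x * y * x) * x ^ n := by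
          nth_rw 1 [pow_succ]
          rw [pow_succ']
          simp only [mul_assoc]
      _ = y := by rw [hxyx, ih]

theorem pow_mul_mul_powSum {A : Type*} [Semiring A] {x y : A} (hxyx : x * y * x = y) (n : ℕ) :
    x ^ n * (y * x * powSum x n) = powSum x n * y := by
  induction n with
  | zero => simp [powSum]
  | succ n ih =>
    calc x ^ (n + 1) * (y * x * powSum x (n + 1))
        = x * (x ^ n * (y * x * powSum x n)) + x ^ (n + 1) * y * x ^ (n + 1) := by
          rw [powSum, Finset.sum_range_succ, ← powSum, pow_succ' x n]
          simp only [mul_add, mul_assoc]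
      _ = powSum x (n + 1) * y := by
          rw [ih, pow_mul_mul_pow hxyx, powSum, powSum, geom_sum_succ, add_mul, one_mul, mul_assoc]

variable {A : Type*} [Ring A] {x y : A} {m : ℕ}

namespace DicyclicRelations

variable (h : DicyclicRelations m x y)
include h

theorem pow_four : y ^ 4 = 1 := by
  rw [pow_mul y 2 2, h.sq_eq_pow, ← pow_mul, mul_comm, h.pow_two_mul]

theorem sub_one_mul_powSum : (x - 1) * powSum x m = y ^ 2 - 1 := by
  rw [powSum, mul_geom_sum, h.sq_eq_pow]

theorem powSum_mul_sub_one : powSum x m * (x - 1) = y ^ 2 - 1 := by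
  rw [powSum, geom_sum_mul, h.sq_eq_pow]

theorem sq_mul_powSum : y ^ 2 * powSum x m = powSum x m * y ^ 2 := by
  rw [h.sq_eq_pow]
  exact (Commute.sum_right _ _ _ fun j _ => Commute.pow_pow_self x m j).eq

theorem mul_mul_powSum : y * x * powSum x m = powSum x m * y ^ 3 :=
  calc y * x * powSum x m = y ^ 2 * (x ^ m * (y * x * powSum x m)) := by
        rw [← mul_assoc, ← h.sq_eq_pow, ← pow_add, h.pow_four, one_mul]
    _ = powSum x m * y ^ 3 := by
        rw [pow_mul_mul_powSum h.mul_mul_self, ← mul_assoc, h.sq_mul_powSum, mul_assoc, ← pow_succ]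

theorem powSum_two_mul : powSum x (2 * m) = powSum x m * (1 + y ^ 2) := by
  rw [powSum, two_mul, Finset.sum_range_add]
  simp only [pow_add, ← Finset.mul_sum]
  rw [← powSum, ← h.sq_eq_pow, h.sq_mul_powSum, mul_add, mul_one]

theorem mul_powSum_two_mul : x * powSum x (2 * m) = powSum x (2 * m) := by
  rw [← sub_eq_zero, ← sub_one_mul, powSum, mul_geom_sum, h.pow_two_mul, sub_self]

theorem powSum_two_mul_mul : powSum x (2 * m) * x = powSum x (2 * m) := by
  rw [← sub_eq_zero, ← mul_sub_one, powSum, geom_sum_mul, h.pow_two_mul, sub_self]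

theorem powSum_two_mul_mul_comm : powSum x (2 * m) * y = y * powSum x (2 * m) :=
  calc powSum x (2 * m) * y = powSum x m * y ^ 3 * (1 + y ^ 2) := by
        rw [h.powSum_two_mul]
        linear_combination (norm := noncomm_ring) -powSum x m * y * h.pow_four
    _ = y * (x * powSum x (2 * m)) := by
        rw [← h.mul_mul_powSum, h.powSum_two_mul]
        noncomm_ring
    _ = y * powSum x (2 * m) := by rw [h.mul_powSum_two_mul]

theorem sq_mul_powSum_two_mul : y ^ 2 * powSum x (2 * m) = powSum x (2 * m) := by
  rw [h.powSum_two_mul, ← mul_assoc, h.sq_mul_powSum]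
  linear_combination (norm := noncomm_ring) powSum x m * h.pow_four

theorem mul_powSum_two_mul_eq_zero {f g : A} (h₁ : f * powSum x m - g * (1 + y) = 0)
    (h₂ : f * (1 + y * x) + g * (x - 1) = 0) : f * powSum x (2 * m) = 0 := by
  rw [h.powSum_two_mul]
  -- `h₁` times `1 + y³` and `h₂` times `powSum x m` both express `f * powSum x m * (1 + y³)`
  -- through `g`; comparing them gives `g * (1 + y + y² + y³) = 0`.
  linear_combination (norm := noncomm_ring) h₁ * (1 + y ^ 2) - h₁ * (1 + y ^ 3) +
    h₂ * powSum x m - f * h.mul_mul_powSum - g * h.sub_one_mul_powSum - g * h.pow_four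

theorem sub_one_mul_powSum_eq_mul : (x - 1) * powSum x m = (y - 1) * (1 + y) := by
  linear_combination (norm := noncomm_ring) h.sub_one_mul_powSum

theorem sub_one_mul_one_add_mul : (x - 1) * (1 + y * x) = (1 - y) * (x - 1) := by
  linear_combination (norm := noncomm_ring) h.mul_mul_self

theorem powSum_mul_sub_one_eq_mul : powSum x m * (x - 1) = (1 + y * x) * (y * x - 1) := by
  linear_combination (norm := noncomm_ring) h.powSum_mul_sub_one - y * h.mul_mul_self

theorem one_add_mul_sub_one : (1 + y) * (x - 1) = (x - 1) * (1 - y * x) := by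
  linear_combination (norm := noncomm_ring) h.mul_mul_self

theorem exists_mul_powSum_sub_eq_mul_powSum_two_mul (t : A) : ∃ f g,
    f * powSum x m - g * (1 + y) = t * powSum x (2 * m) ∧ f * (1 + y * x) + g * (x - 1) = 0 := by
  refine ⟨-t * y ^ 3 * (1 - y * x), -t * y ^ 3 * powSum x m, ?_, ?_⟩
  · linear_combination (norm := noncomm_ring) t * y ^ 3 * h.mul_mul_powSum -
      t * y ^ 3 * h.powSum_two_mul * y + t * h.pow_four * powSum x (2 * m) +
      t * y ^ 3 * h.powSum_two_mul_mul_comm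
  · linear_combination (norm := noncomm_ring) -t * y ^ 3 * h.powSum_mul_sub_one_eq_mul

end DicyclicRelations

end Relations

section GroupRing

open QuaternionGroup

variable (k : Type) [CommRing k] (m : ℕ)

/-- The generator of order `2 * m`, as an element of the group ring. -/
noncomputable def xGen : k[QuaternionGroup m] :=
  MonoidAlgebra.single (a 1) 1

/-- The generator of order `4`, as an element of the group ring. -/
noncomputable def yGen : k[QuaternionGroup m] :=
  MonoidAlgebra.single (xa 0) 1

local notation "𝐱" => xGen k m
local notation "𝐲" => yGen k m
local notation "𝐋" => powSum 𝐱 m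
local notation "𝐍" => powSum 𝐱 (2 * m)

theorem dicyclicRelations : DicyclicRelations m 𝐱 𝐲 where
  mul_mul_self := by simp [xGen, yGen, MonoidAlgebra.single_mul_single]
  sq_eq_pow := by simp [xGen, yGen, MonoidAlgebra.single_pow]
  pow_two_mul := by simp [xGen, MonoidAlgebra.single_pow, MonoidAlgebra.one_def]

theorem augmentation_xGen : augmentation k _ 𝐱 = 1 :=
  augmentation_single _ _

theorem augmentation_yGen : augmentation k _ 𝐲 = 1 :=
  augmentation_single _ _

theorem augmentation_powSum : augmentation k _ 𝐋 = m := by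
  simp [powSum, augmentation_xGen]

variable {k m} in
theorem smul_powSum_add_smul_mul_yGen (α β : k) :
    (α • 𝐍 + β • (𝐲 * 𝐍)) * 𝐲 = β • 𝐍 + α • (𝐲 * 𝐍) := by
  have h := dicyclicRelations k m
  rw [add_mul, smul_mul_assoc, smul_mul_assoc, mul_assoc, h.powSum_two_mul_mul_comm, ← mul_assoc,
    ← sq, h.sq_mul_powSum_two_mul, add_comm]

theorem coeff_powSum_xa (i : ZMod (2 * m)) : 𝐍.coeff (xa i) = 0 := by
  simp [powSum, xGen, MonoidAlgebra.coeff_sum, MonoidAlgebra.single_pow]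

theorem coeff_yGen_mul_a (p : k[QuaternionGroup m]) (i : ZMod (2 * m)) :
    (𝐲 * p).coeff (a i) = p.coeff (xa (m + i)) := by
  rw [yGen, MonoidAlgebra.coeff_single_mul_apply, one_mul]
  exact congrArg p.coeff (congrArg xa (by rw [add_zero]))

theorem coeff_yGen_mul_xa (p : k[QuaternionGroup m]) (i : ZMod (2 * m)) :
    (𝐲 * p).coeff (xa i) = p.coeff (a i) := by
  have : xa i = xa 0 * a i := by simp
  rw [this, yGen, MonoidAlgebra.coeff_single_mul_apply, one_mul, inv_mul_cancel_left]

variable [NeZero m]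

theorem single_a_eq_pow (i : ZMod (2 * m)) :
    MonoidAlgebra.single (a i) (1 : k) = 𝐱 ^ i.val := by
  simp [xGen, MonoidAlgebra.single_pow]

theorem single_xa_eq_mul_pow (i : ZMod (2 * m)) :
    MonoidAlgebra.single (xa i) (1 : k) = 𝐲 * 𝐱 ^ i.val := by
  rw [← single_a_eq_pow, yGen, MonoidAlgebra.single_mul_single, xa_mul_a, zero_add, one_mul]

theorem coeff_powSum_a (i : ZMod (2 * m)) : 𝐍.coeff (a i) = 1 := by
  rw [powSum, MonoidAlgebra.coeff_sum, Finsupp.finsetSum_apply, Finset.sum_eq_single i.val]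
  · simp [← single_a_eq_pow]
  · intro j hj hji
    have : (j : ZMod (2 * m)) ≠ i := fun h =>
      hji (by rw [← h, ZMod.val_natCast_of_lt (Finset.mem_range.1 hj)])
    simp [xGen, MonoidAlgebra.single_pow, this]
  · exact fun hi => absurd (Finset.mem_range.2 i.val_lt) hi

theorem normElement_eq : normElement k (QuaternionGroup m) = (1 + 𝐲) * 𝐍 := by
  ext (i | i) <;>
  simp [add_mul, coeff_normElement, coeff_powSum_a, coeff_powSum_xa, coeff_yGen_mul_a,
    coeff_yGen_mul_xa]

variable {k m}

theorem eq_zero_of_smul_add_smul_eq_zero {α β : k} (h : α • 𝐍 + β • (𝐲 * 𝐍) = 0) :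
    α = 0 ∧ β = 0 := by
  have hcoeff (g : QuaternionGroup m) : (α • 𝐍 + β • (𝐲 * 𝐍)).coeff g = 0 := by simp [h]
  exact ⟨by simpa [coeff_powSum_a, coeff_powSum_xa, coeff_yGen_mul_a] using hcoeff (a 1),
    by simpa [coeff_powSum_a, coeff_powSum_xa, coeff_yGen_mul_xa] using hcoeff (xa 1)⟩

theorem exists_eq_smul_add_smul_of_mul_sub_one_eq_zero {p : k[QuaternionGroup m]}
    (hp : p * (𝐱 - 1) = 0) : ∃ α β : k, p = α • 𝐍 + β • (𝐲 * 𝐍) := by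
  have hmul (i : ZMod (2 * m)) : p * MonoidAlgebra.single (a i) 1 = p := by
    rw [single_a_eq_pow]
    induction i.val with
    | zero => simp
    | succ j ih => rw [pow_succ, ← mul_assoc, ih, ← sub_eq_zero, ← mul_sub_one, hp]
  have ha (i : ZMod (2 * m)) : p.coeff (a i) = p.coeff 1 := by
    conv_lhs => rw [← hmul i]
    rw [MonoidAlgebra.coeff_mul_single_apply, mul_inv_cancel, mul_one]
  have hxa (i : ZMod (2 * m)) : p.coeff (xa i) = p.coeff (xa 0) := by
    conv_lhs => rw [← hmul i, show xa i = xa 0 * a i by simp]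
    rw [MonoidAlgebra.coeff_mul_single_apply, mul_inv_cancel_right, mul_one]
  refine ⟨p.coeff 1, p.coeff (xa 0), ?_⟩
  ext (i | i)
  · simp [ha, coeff_powSum_a, coeff_powSum_xa, coeff_yGen_mul_a]
  · simp [hxa, coeff_powSum_a, coeff_powSum_xa, coeff_yGen_mul_xa]

theorem exists_eq_add_mul_sub_one (v : k[QuaternionGroup m]) :
    ∃ (α β : k) (w : k[QuaternionGroup m]), v = α • 1 + β • 𝐲 + w * (𝐱 - 1) := by
  induction v using MonoidAlgebra.induction_linear with
  | zero => exact ⟨0, 0, 0, by simp⟩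
  | add v v' hv hv' =>
    obtain ⟨α, β, w, rfl⟩ := hv
    obtain ⟨α', β', w', rfl⟩ := hv'
    exact ⟨α + α', β + β', w + w', by rw [add_mul]; module⟩
  | single g c =>
    have hpow (j : ℕ) : 𝐱 ^ j = 1 + powSum 𝐱 j * (𝐱 - 1) := by
      rw [powSum, geom_sum_mul, add_sub_cancel]
    rw [← mul_one c, ← MonoidAlgebra.smul_single']
    obtain i | i := g
    · refine ⟨c, 0, c • powSum 𝐱 i.val, ?_⟩
      rw [single_a_eq_pow, hpow, smul_mul_assoc]
      module
    · refine ⟨0, c, c • (𝐲 * powSum 𝐱 i.val), ?_⟩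
      rw [single_xa_eq_mul_pow, hpow, smul_mul_assoc, mul_add, mul_one, mul_assoc]
      module

theorem exists_eq_mul_sub_one_of_mul_powSum_eq_zero {p : k[QuaternionGroup m]} (hp : p * 𝐍 = 0) :
    ∃ w, p = w * (𝐱 - 1) := by
  have h := dicyclicRelations k m
  obtain ⟨α, β, w, rfl⟩ := exists_eq_add_mul_sub_one p
  have hαβ : α • 𝐍 + β • (𝐲 * 𝐍) = 0 := by
    rw [← hp, add_mul, add_mul, mul_assoc w, sub_mul, h.mul_powSum_two_mul, smul_mul_assoc,
      smul_mul_assoc]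
    simp
  obtain ⟨rfl, rfl⟩ := eq_zero_of_smul_add_smul_eq_zero hαβ
  exact ⟨w, by simp⟩

theorem exists_smul_normElement_eq {p : k[QuaternionGroup m]} (hx : p * (𝐱 - 1) = 0)
    (hy : p * (𝐲 - 1) = 0) : ∃ c : k, c • normElement k (QuaternionGroup m) = p := by
  obtain ⟨α, β, rfl⟩ := exists_eq_smul_add_smul_of_mul_sub_one_eq_zero hx
  have hαβ : (β - α) • 𝐍 + (α - β) • (𝐲 * 𝐍) = 0 := by
    rw [← hy, mul_sub_one, smul_powSum_add_smul_mul_yGen]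
    module
  obtain rfl := sub_eq_zero.1 (eq_zero_of_smul_add_smul_eq_zero hαβ).1
  exact ⟨β, by rw [normElement_eq, one_add_mul, smul_add]⟩

theorem exists_mul_sub_one_eq_and_mul_sub_one_eq {f g : k[QuaternionGroup m]}
    (h₁ : f * 𝐋 - g * (1 + 𝐲) = 0) (h₂ : f * (1 + 𝐲 * 𝐱) + g * (𝐱 - 1) = 0) :
    ∃ p, p * (𝐱 - 1) = f ∧ p * (𝐲 - 1) = g := by
  have h := dicyclicRelations k m
  obtain ⟨p, rfl⟩ := exists_eq_mul_sub_one_of_mul_powSum_eq_zero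
    (h.mul_powSum_two_mul_eq_zero h₁ h₂)
  have hg₀ : (g - p * (𝐲 - 1)) * (𝐱 - 1) = 0 := by
    linear_combination (norm := noncomm_ring) h₂ - p * h.sub_one_mul_one_add_mul
  obtain ⟨α, β, hαβ⟩ := exists_eq_smul_add_smul_of_mul_sub_one_eq_zero hg₀
  have hsum : (α + β) • 𝐍 + (α + β) • (𝐲 * 𝐍) = 0 :=
    calc (α + β) • 𝐍 + (α + β) • (𝐲 * 𝐍) = (g - p * (𝐲 - 1)) * (1 + 𝐲) := by
          rw [hαβ, mul_add, mul_one, smul_powSum_add_smul_mul_yGen]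
          module
      _ = 0 := by linear_combination (norm := noncomm_ring) p * h.sub_one_mul_powSum_eq_mul - h₁
  obtain rfl := eq_neg_of_add_eq_zero_right (eq_zero_of_smul_add_smul_eq_zero hsum).1
  refine ⟨p - α • 𝐍, ?_, ?_⟩
  · rw [sub_mul, smul_mul_assoc, mul_sub_one 𝐍, h.powSum_two_mul_mul, sub_self, smul_zero,
      sub_zero]
  · rw [sub_mul, smul_mul_assoc, mul_sub_one 𝐍, h.powSum_two_mul_mul_comm,
      sub_eq_iff_eq_add.1 hαβ]
    module

theorem exists_mul_one_add_mul_eq {u v : k[QuaternionGroup m]}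
    (huv : u * (𝐱 - 1) + v * (1 - 𝐲 * 𝐱) = 0) :
    ∃ f g, f * (1 + 𝐲 * 𝐱) + g * (𝐱 - 1) = v := by
  have h := dicyclicRelations k m
  obtain ⟨α, β, w, rfl⟩ := exists_eq_add_mul_sub_one v
  have hcomm : (1 - 𝐲 * 𝐱) * 𝐍 = 𝐍 - 𝐲 * 𝐍 := by
    rw [sub_mul, one_mul, mul_assoc, h.mul_powSum_two_mul]
  have hx : (𝐱 - 1) * 𝐍 = 0 := by rw [sub_one_mul, h.mul_powSum_two_mul, sub_self]
  have hxy : (𝐱 - 1) * (𝐲 * 𝐍) = 0 := by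
    rw [← h.powSum_two_mul_mul_comm, ← mul_assoc, hx, zero_mul]
  have hyy : 𝐲 * (𝐲 * 𝐍) = 𝐍 := by rw [← mul_assoc, ← sq, h.sq_mul_powSum_two_mul]
  have hαβ : (α - β) • 𝐍 + (β - α) • (𝐲 * 𝐍) = 0 :=
    calc (α - β) • 𝐍 + (β - α) • (𝐲 * 𝐍)
        = (α • 1 + β • 𝐲 + w * (𝐱 - 1)) * (𝐍 - 𝐲 * 𝐍) := by
          rw [add_mul, add_mul, mul_assoc w, mul_sub (𝐱 - 1), hx, hxy, sub_zero, mul_zero,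
            smul_mul_assoc, smul_mul_assoc, mul_sub 𝐲, hyy, one_mul]
          module
      _ = (u * (𝐱 - 1) + (α • 1 + β • 𝐲 + w * (𝐱 - 1)) * (1 - 𝐲 * 𝐱)) * 𝐍 := by
          rw [add_mul (u * _), mul_assoc u, hx, mul_zero, zero_add, mul_assoc _ (1 - 𝐲 * 𝐱), hcomm]
      _ = 0 := by rw [huv, zero_mul]
  obtain rfl := sub_eq_zero.1 (eq_zero_of_smul_add_smul_eq_zero hαβ).1
  refine ⟨α • 1, w - α • 𝐲, ?_⟩
  simp only [smul_mul_assoc, sub_mul, mul_sub_one, one_mul]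
  module

theorem exists_mul_powSum_sub_eq_and_mul_add_eq {u v : k[QuaternionGroup m]}
    (huv : u * (𝐱 - 1) + v * (1 - 𝐲 * 𝐱) = 0) :
    ∃ f g, f * 𝐋 - g * (1 + 𝐲) = u ∧ f * (1 + 𝐲 * 𝐱) + g * (𝐱 - 1) = v := by
  have h := dicyclicRelations k m
  obtain ⟨f, g, rfl⟩ := exists_mul_one_add_mul_eq huv
  have hu₀ : (u - (f * 𝐋 - g * (1 + 𝐲))) * (𝐱 - 1) = 0 := by
    linear_combination (norm := noncomm_ring) huv - f * h.powSum_mul_sub_one_eq_mul +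
      g * h.one_add_mul_sub_one
  obtain ⟨α, β, hαβ⟩ := exists_eq_smul_add_smul_of_mul_sub_one_eq_zero hu₀
  obtain ⟨f', g', hu, hv⟩ := h.exists_mul_powSum_sub_eq_mul_powSum_two_mul (α • 1 + β • 𝐲)
  rw [add_mul, smul_mul_assoc, smul_mul_assoc, one_mul, ← hαβ] at hu
  refine ⟨f + f', g + g', ?_, ?_⟩
  · linear_combination (norm := noncomm_ring) hu
  · linear_combination (norm := noncomm_ring) hv

theorem exists_mul_sub_one_add_mul_eq {p : k[QuaternionGroup m]}
    (hp : augmentation k (QuaternionGroup m) p = 0) :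
    ∃ u v, u * (𝐱 - 1) + v * (1 - 𝐲 * 𝐱) = p := by
  obtain ⟨α, β, w, rfl⟩ := exists_eq_add_mul_sub_one p
  have hαβ : α = -β := by
    simpa [augmentation_xGen, augmentation_yGen, add_eq_zero_iff_eq_neg] using hp
  refine ⟨w - β • 𝐲, -β • 1, ?_⟩
  simp only [hαβ, smul_mul_assoc, sub_mul, mul_sub_one, one_mul]
  module

end GroupRing

section Periodic

variable (k : Type) [CommRing k] (m : ℕ)

local notation "𝐱" => xGen k m
local notation "𝐲" => yGen k m
local notation "𝐋" => powSum 𝐱 m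

/-- The differential `k[Q] → k[Q]²` in degrees divisible by `4`. -/
noncomputable def d₀ : Matrix (Fin 1) (Fin 2) k[QuaternionGroup m] :=
  !![𝐱 - 1, 𝐲 - 1]

/-- The differential `k[Q]² → k[Q]²` in degrees congruent to `1` modulo `4`. -/
noncomputable def d₁ : Matrix (Fin 2) (Fin 2) k[QuaternionGroup m] :=
  !![𝐋, 1 + 𝐲 * 𝐱; -(1 + 𝐲), 𝐱 - 1]

/-- The differential `k[Q]² → k[Q]` in degrees congruent to `2` modulo `4`. -/
noncomputable def d₂ : Matrix (Fin 2) (Fin 1) k[QuaternionGroup m] :=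
  !![𝐱 - 1; 1 - 𝐲 * 𝐱]

variable {k m}

theorem vecMul_d₀ (v : Fin 1 → k[QuaternionGroup m]) :
    v ᵥ* d₀ k m = ![v 0 * (𝐱 - 1), v 0 * (𝐲 - 1)] := by
  simp [d₀, Matrix.vecMul_eq_sum, funext_iff, Fin.forall_fin_two]

theorem vecMul_d₁ (v : Fin 2 → k[QuaternionGroup m]) :
    v ᵥ* d₁ k m = ![v 0 * 𝐋 - v 1 * (1 + 𝐲), v 0 * (1 + 𝐲 * 𝐱) + v 1 * (𝐱 - 1)] := by
  simp [d₁, Matrix.vecMul_eq_sum, funext_iff, Fin.forall_fin_two, sub_eq_add_neg, mul_add, add_comm]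

theorem vecMul_d₂ (v : Fin 2 → k[QuaternionGroup m]) :
    v ᵥ* d₂ k m = ![v 0 * (𝐱 - 1) + v 1 * (1 - 𝐲 * 𝐱)] := by
  simp [d₂, Matrix.vecMul_eq_sum, funext_iff]

theorem augmentation_d₀ (i : Fin 1) (j : Fin 2) :
    augmentation k (QuaternionGroup m) (d₀ k m i j) = 0 := by
  fin_cases i
  revert j
  simp [d₀, Fin.forall_fin_two, augmentation_xGen, augmentation_yGen]

theorem augmentation_d₁ [CharP k 2] (hm : Even m) (i j : Fin 2) :
    augmentation k (QuaternionGroup m) (d₁ k m i j) = 0 := by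
  have hm₀ : (m : k) = 0 := (CharP.cast_eq_zero_iff k 2 m).2 hm.two_dvd
  revert i j
  simp [d₁, Fin.forall_fin_two, augmentation_xGen, augmentation_yGen, augmentation_powSum, hm₀,
    CharTwo.add_self_eq_zero, CharTwo.neg_eq]

theorem augmentation_d₂ (i : Fin 2) (j : Fin 1) :
    augmentation k (QuaternionGroup m) (d₂ k m i j) = 0 := by
  fin_cases j
  revert i
  simp [d₂, Fin.forall_fin_two, augmentation_xGen, augmentation_yGen]

variable [NeZero m]

variable (k m) in
/-- The differential `k[Q] → k[Q]` in degrees congruent to `3` modulo `4`. -/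
noncomputable def d₃ : Matrix (Fin 1) (Fin 1) k[QuaternionGroup m] :=
  !![normElement k (QuaternionGroup m)]

theorem vecMul_d₃ (v : Fin 1 → k[QuaternionGroup m]) :
    v ᵥ* d₃ k m = ![augmentation k _ (v 0) • normElement k (QuaternionGroup m)] := by
  simp [d₃, Matrix.vecMul_eq_sum, funext_iff, mul_normElement]

theorem augmentation_d₃ [CharP k 2] (i j : Fin 1) :
    augmentation k (QuaternionGroup m) (d₃ k m i j) = 0 := by
  fin_cases i
  fin_cases j
  simp [d₃, normElement_eq, augmentation_yGen, CharTwo.add_self_eq_zero]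

theorem vecMul_d₀_eq_zero_iff (v : Fin 1 → k[QuaternionGroup m]) :
    v ᵥ* d₀ k m = 0 ↔ ∃ c : k, c • normElement k (QuaternionGroup m) = v 0 := by
  simp only [vecMul_d₀, Matrix.cons_eq_zero_iff, Matrix.zero_empty, and_true]
  refine ⟨fun ⟨hx, hy⟩ => exists_smul_normElement_eq hx hy, ?_⟩
  rintro ⟨c, hc⟩
  simp [← hc, normElement_mul, augmentation_xGen, augmentation_yGen]

theorem exact_normElement_d₀ : Function.Exact
    (fun (c : k) (_ : Fin 1) => c • normElement k (QuaternionGroup m)) (· ᵥ* d₀ k m) :=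
  fun v => (vecMul_d₀_eq_zero_iff v).trans (by simp [funext_iff])

theorem exact_d₀_d₁ : Function.Exact (· ᵥ* d₀ k m) (· ᵥ* d₁ k m) := by
  have h := dicyclicRelations k m
  refine fun v => ⟨fun hv => ?_, ?_⟩
  · simp only [vecMul_d₁, Matrix.cons_eq_zero_iff, Matrix.zero_empty, and_true] at hv
    obtain ⟨p, hp₀, hp₁⟩ := exists_mul_sub_one_eq_and_mul_sub_one_eq hv.1 hv.2
    exact ⟨![p], by simp [vecMul_d₀, hp₀, hp₁, funext_iff, Fin.forall_fin_two]⟩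
  · rintro ⟨p, rfl⟩
    simp only [vecMul_d₀, vecMul_d₁, Matrix.cons_eq_zero_iff, Matrix.zero_empty, and_true,
      Matrix.cons_val_zero, Matrix.cons_val_one]
    constructor
    · linear_combination (norm := noncomm_ring) p 0 * h.sub_one_mul_powSum_eq_mul
    · linear_combination (norm := noncomm_ring) p 0 * h.sub_one_mul_one_add_mul

theorem exact_d₁_d₂ : Function.Exact (· ᵥ* d₁ k m) (· ᵥ* d₂ k m) := by
  have h := dicyclicRelations k m
  refine fun v => ⟨fun hv => ?_, ?_⟩
  · simp only [vecMul_d₂, Matrix.cons_eq_zero_iff, Matrix.zero_empty, and_true] at hv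
    obtain ⟨f, g, hu, hv⟩ := exists_mul_powSum_sub_eq_and_mul_add_eq hv
    exact ⟨![f, g], by simp [vecMul_d₁, hu, hv, funext_iff, Fin.forall_fin_two]⟩
  · rintro ⟨v, rfl⟩
    simp only [vecMul_d₁, vecMul_d₂, Matrix.cons_eq_zero_iff, Matrix.zero_empty, and_true,
      Matrix.cons_val_zero, Matrix.cons_val_one]
    linear_combination (norm := noncomm_ring) v 0 * h.powSum_mul_sub_one_eq_mul -
      v 1 * h.one_add_mul_sub_one

theorem exact_d₂_d₃ : Function.Exact (· ᵥ* d₂ k m) (· ᵥ* d₃ k m) := by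
  refine fun v => ⟨fun hv => ?_, ?_⟩
  · simp only [vecMul_d₃, Matrix.cons_eq_zero_iff, Matrix.zero_empty, and_true] at hv
    obtain ⟨u, w, huw⟩ :=
      exists_mul_sub_one_add_mul_eq (eq_zero_of_smul_normElement_eq_zero hv)
    exact ⟨![u, w], by simp [vecMul_d₂, huw, funext_iff]⟩
  · rintro ⟨v, rfl⟩
    simp [vecMul_d₂, vecMul_d₃, augmentation_xGen, augmentation_yGen]

theorem exact_d₃_d₀ : Function.Exact (· ᵥ* d₃ k m) (· ᵥ* d₀ k m) := by
  intro v
  rw [vecMul_d₀_eq_zero_iff]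
  constructor
  · rintro ⟨c, hc⟩
    exact ⟨![c • 1], by simp [vecMul_d₃, hc, funext_iff]⟩
  · rintro ⟨w, rfl⟩
    exact ⟨augmentation k _ (w 0), by simp [vecMul_d₃]⟩

/-- The ranks `1, 2, 2, 1, 1, 2, 2, 1, …` of the free modules in the coresolution. -/
def periodicRank : ℕ → ℕ
  | 0 => 1
  | 1 => 2
  | 2 => 2
  | 3 => 1
  | n + 4 => periodicRank n

theorem periodicRank_eq : ∀ n, periodicRank n = if n % 4 = 0 ∨ n % 4 = 3 then 1 else 2
  | 0 => rfl
  | 1 => rfl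
  | 2 => rfl
  | 3 => rfl
  | n + 4 => by rw [periodicRank, periodicRank_eq n, Nat.add_mod_right]

variable (k m) in
/-- The differentials `d₀, d₁, d₂, d₃, d₀, …` of the coresolution. -/
noncomputable def periodicD :
    ∀ n, Matrix (Fin (periodicRank n)) (Fin (periodicRank (n + 1))) k[QuaternionGroup m]
  | 0 => d₀ k m
  | 1 => d₁ k m
  | 2 => d₂ k m
  | 3 => d₃ k m
  | n + 4 => periodicD n

theorem exact_periodicD :
    ∀ n, Function.Exact (· ᵥ* periodicD k m n) (· ᵥ* periodicD k m (n + 1))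
  | 0 => exact_d₀_d₁
  | 1 => exact_d₁_d₂
  | 2 => exact_d₂_d₃
  | 3 => exact_d₃_d₀
  | n + 4 => exact_periodicD n

theorem augmentation_periodicD [CharP k 2] (hm : Even m) :
    ∀ n i j, augmentation k (QuaternionGroup m) (periodicD k m n i j) = 0
  | 0 => augmentation_d₀
  | 1 => augmentation_d₁ hm
  | 2 => augmentation_d₂
  | 3 => augmentation_d₃
  | n + 4 => augmentation_periodicD hm n

variable (k) in
/-- The periodic coresolution of `k` over the group ring of the dicyclic group of order `4 * m`,
dual to the resolution of Cartan and Eilenberg. -/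
noncomputable def periodicCoresolution [CharP k 2] (hm : Even m) :
    MinimalFreeCoresolution k (QuaternionGroup m) where
  rank := periodicRank
  d := periodicD k m
  rank_zero := rfl
  exact_zero := exact_normElement_d₀
  exact_succ := exact_periodicD
  augmentation_d := augmentation_periodicD hm

end Periodic

end QuaternionCohomology

theorem groupCohomology_generalized_quaternion_dimensions_general
    (k : Type) [CommRing k] [CharP k 2] (m : ℕ) [NeZero m] (hm : Even m) (s : ℕ) :
    Module.finrank k (groupCohomology (Rep.trivial k (QuaternionGroup m) k) s) =
      if s % 4 = 0 ∨ s % 4 = 3 then 1 else 2 := by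
  have : Nontrivial k := CharP.nontrivial_of_char_ne_one (v := 2) (by decide)
  rw [(QuaternionCohomology.periodicCoresolution k hm).finrank_groupCohomology s]
  exact QuaternionCohomology.periodicRank_eq s

/-- For `k` a field of characteristic `2`, `n ≥ 4`, and `Q_{2^n}` the generalized quaternion
group of order `2^n` (`QuaternionGroup (2^(n-2))`, of order `4 * 2^(n-2) = 2^n`), the
dimensions of `H^s(Q_{2^n}; k)` are 4-periodic: `dim H^s = 1` if `s ≡ 0, 3 (mod 4)` and
`dim H^s = 2` if `s ≡ 1, 2 (mod 4)`. -/
theorem groupCohomology_generalized_quaternion_dimensions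
    (k : Type) [Field k] [CharP k 2] (n : ℕ) (hn : 4 ≤ n) (s : ℕ) :
    Module.finrank k
        (groupCohomology (Rep.trivial k (QuaternionGroup (2 ^ (n - 2))) k) s) =
      if s % 4 = 0 ∨ s % 4 = 3 then 1 else 2 :=
  groupCohomology_generalized_quaternion_dimensions_general k _
    (even_two.pow_of_ne_zero (by lia)) s
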